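/- The redundant information is nonnegative: Red(X,Y→Z) = I(X;Z) − Un(X→Z|Y) ≥ 0. -/

import Mathlib

open Finset

/-- Shannon entropy of a distribution on a finite type (natural-log base). -/
noncomputable def ent {α : Type*} [Fintype α] (p : α → ℝ) : ℝ :=
  ∑ a, Real.negMulLog (p a)

/-- Mutual information between the two coordinates of a joint distribution. -/
noncomputable def mutInfo {α β : Type*} [Fintype α] [Fintype β] (q : α × β → ℝ) : ℝ :=
  ent (fun a => ∑ b, q (a, b)) + ent (fun b => ∑ a, q (a, b)) - ent q

/-- Conditional entropy of the first coordinate given the second: H(A|B) = H(A,B) - H(B). -/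
noncomputable def condEntFst {α β : Type*} [Fintype α] [Fintype β] (q : α × β → ℝ) : ℝ :=
  ent q - ent (fun b => ∑ a, q (a, b))

/-- Conditional entropy of the second coordinate given the first: H(B|A) = H(A,B) - H(A). -/
noncomputable def condEntSnd {α β : Type*} [Fintype α] [Fintype β] (q : α × β → ℝ) : ℝ :=
  ent q - ent (fun a => ∑ b, q (a, b))

section PID

variable {X Y Z : Type*} [Fintype X] [Fintype Y] [Fintype Z]

/-- 𝒳-marginal of a joint distribution on 𝒳×𝒴×𝒵. -/
noncomputable def pX (p : X × Y × Z → ℝ) (x : X) : ℝ := ∑ y, ∑ z, p (x, y, z)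

/-- 𝒴-marginal. -/
noncomputable def pY (p : X × Y × Z → ℝ) (y : Y) : ℝ := ∑ x, ∑ z, p (x, y, z)

/-- 𝒵-marginal. -/
noncomputable def pZ (p : X × Y × Z → ℝ) (z : Z) : ℝ := ∑ x, ∑ y, p (x, y, z)

/-- The do-operation: q(x,y,z) = p(x,y,z)·c(z)/p_Z(z) if p_Z(z) > 0, else 0. -/
noncomputable def doOp (p : X × Y × Z → ℝ) (c : Z → ℝ) : X × Y × Z → ℝ :=
  fun t => if 0 < pZ p t.2.2 then p t * c t.2.2 / pZ p t.2.2 else 0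

/-- (𝒳,𝒵)-marginal. -/
noncomputable def margXZ (p : X × Y × Z → ℝ) : X × Z → ℝ := fun t => ∑ y, p (t.1, y, t.2)

/-- (𝒴,𝒵)-marginal. -/
noncomputable def margYZ (p : X × Y × Z → ℝ) : Y × Z → ℝ := fun t => ∑ x, p (x, t.1, t.2)

/-- (𝒳,𝒴)-marginal. -/
noncomputable def margXY (p : X × Y × Z → ℝ) : X × Y → ℝ := fun t => ∑ z, p (t.1, t.2, z)

/-- c_y(z) = Pr(Z = z | Y = y). -/
noncomputable def cy (p : X × Y × Z → ℝ) (y : Y) : Z → ℝ :=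
  fun z => (∑ x, p (x, y, z)) / pY p y

/-- The distribution of (A_y, B_y, C_y) = do(p | c_y). -/
noncomputable def doy (p : X × Y × Z → ℝ) (y : Y) : X × Y × Z → ℝ := doOp p (cy p y)

/-- c^x(z) = Pr(Z = z | X = x). -/
noncomputable def cx (p : X × Y × Z → ℝ) (x : X) : Z → ℝ :=
  fun z => (∑ y, p (x, y, z)) / pX p x

/-- The distribution of (A^x, B^x, C^x) = do(p | c^x). -/
noncomputable def dox (p : X × Y × Z → ℝ) (x : X) : X × Y × Z → ℝ := doOp p (cx p x)

/-- Unique information Un(X→Z|Y) = Σ_{y : p_Y(y)>0} p_Y(y)·I(A_y;C_y). -/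
noncomputable def Un (p : X × Y × Z → ℝ) : ℝ :=
  ∑ y ∈ Finset.univ.filter (fun y => 0 < pY p y), pY p y * mutInfo (margXZ (doy p y))

/-- Unique information Un(Y→Z|X) = Σ_{x : p_X(x)>0} p_X(x)·I(B^x;C^x). -/
noncomputable def UnYX (p : X × Y × Z → ℝ) : ℝ :=
  ∑ x ∈ Finset.univ.filter (fun x => 0 < pX p x), pX p x * mutInfo (margYZ (dox p x))

/-- Redundant information Red(X,Y→Z) = I(X;Z) − Un(X→Z|Y). -/
noncomputable def Red (p : X × Y × Z → ℝ) : ℝ := mutInfo (margXZ p) - Un p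

/-- Conditional mutual information I(X;Z|Y) = H(X,Y) + H(Y,Z) − H(Y) − H(X,Y,Z). -/
noncomputable def condMI (p : X × Y × Z → ℝ) : ℝ :=
  ent (margXY p) + ent (margYZ p) - ent (pY p) - ent p

/-- Synergistic information Syn(X,Y→Z) = I(X;Z|Y) − Un(X→Z|Y). -/
noncomputable def Syn (p : X × Y × Z → ℝ) : ℝ := condMI p - Un p

end PID

/-!
The operation `do(p|c)` feeds the input distribution `c` into the channel `p(x|z)`, and mutual
information is concave in the input of a fixed channel: it is the entropy of the output, which is
concave in `c`, plus a term linear in `c`. Since `∑ y, p(y) c_y = p_Z` and `do(p|p_Z) = p`, Jensen's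
inequality gives `∑ y, p(y) I(A_y;C_y) ≤ I(X;Z)`.
-/

section ChannelConcavity

variable {X Z : Type*} [Fintype X] [Fintype Z]

/-- The joint distribution `(x, z) ↦ W x z * c z` of output and input of a channel from `Z` to `X`
with transition matrix `W` and input `c`. The column `W · z` is the output distribution on input
`z`, so that `W *ᵥ c` is the output distribution; columns are not required to sum to `1`. -/
def channelJoint (W : Matrix X Z ℝ) (c : Z → ℝ) : X × Z → ℝ :=
  fun t => W t.1 t.2 * c t.2

lemma ent_channelJoint (W : Matrix X Z ℝ) (c : Z → ℝ) :
    ent (channelJoint W c) =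
      ∑ z, (c z * ent (W.col z) + (∑ x, W x z) * Real.negMulLog (c z)) := by
  simp only [ent, channelJoint, Fintype.sum_prod_type_right, Real.negMulLog_mul, sum_add_distrib,
    mul_sum, sum_mul, Matrix.col_apply]

lemma mutInfo_channelJoint (W : Matrix X Z ℝ) (c : Z → ℝ) :
    mutInfo (channelJoint W c) =
      ent (W.mulVec c) + ∑ z, c z * (Real.negMulLog (∑ x, W x z) - ent (W.col z)) := by
  have output : (fun x => ∑ z, channelJoint W c (x, z)) = W.mulVec c := rfl
  have input : ent (fun z => ∑ x, channelJoint W c (x, z)) =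
      ∑ z, (c z * Real.negMulLog (∑ x, W x z) + (∑ x, W x z) * Real.negMulLog (c z)) := by
    simp only [ent, channelJoint, ← sum_mul, Real.negMulLog_mul]
  rw [mutInfo, output, input, ent_channelJoint]
  simp only [mul_sub, sum_add_distrib, sum_sub_distrib]
  ring

lemma concaveOn_ent : ConcaveOn ℝ (Set.Ici 0) (ent : (X → ℝ) → ℝ) := by
  refine ⟨convex_Ici 0, fun p hp q hq a b ha hb hab => ?_⟩
  simp only [ent, smul_sum, ← sum_add_distrib]
  exact sum_le_sum fun x _ => Real.concaveOn_negMulLog.2 (hp x) (hq x) ha hb hab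

lemma concaveOn_mutInfo_channelJoint {W : Matrix X Z ℝ} (hW : ∀ x z, 0 ≤ W x z) :
    ConcaveOn ℝ (Set.Ici 0) fun c => mutInfo (channelJoint W c) := by
  have output_nonneg : Set.Ici 0 ⊆ W.mulVecLin ⁻¹' Set.Ici 0 :=
    fun c hc x => sum_nonneg fun z _ => mul_nonneg (hW x z) (hc z)
  have output : ConcaveOn ℝ (Set.Ici 0) fun c => ent (W.mulVec c) :=
    (concaveOn_ent.comp_linearMap W.mulVecLin).subset output_nonneg (convex_Ici 0)
  have linear : ConcaveOn ℝ (Set.Ici 0) fun c : Z → ℝ =>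
      ∑ z, c z * (Real.negMulLog (∑ x, W x z) - ent (W.col z)) :=
    (Fintype.linearCombination ℝ fun z =>
      Real.negMulLog (∑ x, W x z) - ent (W.col z)).concaveOn (convex_Ici 0)
  simp only [mutInfo_channelJoint]
  exact output.add linear

end ChannelConcavity

section DoOperation

variable {X Y Z : Type*} [Fintype X] [Fintype Y] {p : X × Y × Z → ℝ}

/-- The conditional distribution `p(x|z)` as a transition matrix from `Z` to `X`. Columns with
`pZ p z = 0` vanish, by the convention `x / 0 = 0`. -/
noncomputable def condXZ (p : X × Y × Z → ℝ) : Matrix X Z ℝ :=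
  fun x z => margXZ p (x, z) / pZ p z

lemma pZ_nonneg (hp : 0 ≤ p) (z : Z) : 0 ≤ pZ p z :=
  sum_nonneg fun _ _ => sum_nonneg fun _ _ => hp _

lemma le_pZ (hp : 0 ≤ p) (x : X) (y : Y) (z : Z) : p (x, y, z) ≤ pZ p z :=
  (single_le_sum (fun y _ => hp (x, y, z)) (mem_univ y)).trans
    (single_le_sum (f := fun x => ∑ y, p (x, y, z))
      (fun x _ => sum_nonneg fun y _ => hp (x, y, z)) (mem_univ x))

lemma condXZ_nonneg (hp : 0 ≤ p) (x : X) (z : Z) : 0 ≤ condXZ p x z :=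
  div_nonneg (sum_nonneg fun _ _ => hp _) (pZ_nonneg hp z)

lemma margXZ_doOp (hp : 0 ≤ p) (c : Z → ℝ) :
    margXZ (doOp p c) = channelJoint (condXZ p) c := by
  ext ⟨x, z⟩
  rcases (pZ_nonneg hp z).eq_or_lt with hz | hz
  · simp [margXZ, doOp, channelJoint, condXZ, ← hz]
  · simp only [margXZ, doOp, channelJoint, condXZ, if_pos hz, ← sum_div, ← sum_mul]
    ring

lemma doOp_pZ (hp : 0 ≤ p) : doOp p (pZ p) = p := by
  ext ⟨x, y, z⟩
  rcases (pZ_nonneg hp z).eq_or_lt with hz | hz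
  · have : p (x, y, z) = 0 := ((le_pZ hp x y z).trans hz.ge).antisymm (hp _)
    simp [doOp, this]
  · simp [doOp, hz, hz.ne']

lemma concaveOn_mutInfo_margXZ_doOp [Fintype Z] (hp : 0 ≤ p) :
    ConcaveOn ℝ (Set.Ici 0) fun c => mutInfo (margXZ (doOp p c)) := by
  simpa only [margXZ_doOp hp] using concaveOn_mutInfo_channelJoint (condXZ_nonneg hp)

end DoOperation

section Conditioning

variable {X Y Z : Type*} [Fintype X] [Fintype Z] {p : X × Y × Z → ℝ}

lemma pY_nonneg (hp : 0 ≤ p) (y : Y) : 0 ≤ pY p y :=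
  sum_nonneg fun _ _ => sum_nonneg fun _ _ => hp _

lemma cy_nonneg (hp : 0 ≤ p) (y : Y) : 0 ≤ cy p y :=
  fun _ => div_nonneg (sum_nonneg fun _ _ => hp _) (pY_nonneg hp y)

lemma sum_pY [Fintype Y] (p : X × Y × Z → ℝ) : ∑ y, pY p y = ∑ t, p t := by
  simp only [pY, Fintype.sum_prod_type]
  exact sum_comm

lemma sum_le_pY (hp : 0 ≤ p) (y : Y) (z : Z) : ∑ x, p (x, y, z) ≤ pY p y :=
  sum_le_sum fun x _ => single_le_sum (fun z _ => hp (x, y, z)) (mem_univ z)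

lemma pY_mul_cy (hp : 0 ≤ p) (y : Y) (z : Z) : pY p y * cy p y z = ∑ x, p (x, y, z) :=
  mul_div_cancel_of_imp' fun hy =>
    ((sum_le_pY hp y z).trans hy.le).antisymm (sum_nonneg fun _ _ => hp _)

lemma sum_pY_smul_cy [Fintype Y] (hp : 0 ≤ p) : ∑ y, pY p y • cy p y = pZ p := by
  ext z
  simp only [Finset.sum_apply, Pi.smul_apply, smul_eq_mul, pY_mul_cy hp, pZ]
  exact sum_comm

lemma Un_eq_sum [Fintype Y] (hp : 0 ≤ p) :
    Un p = ∑ y, pY p y * mutInfo (margXZ (doOp p (cy p y))) :=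
  sum_filter_of_ne fun y _ hy => (pY_nonneg hp y).lt_of_ne' (left_ne_zero_of_mul hy)

end Conditioning

theorem stmt6 {X Y Z : Type*} [Fintype X] [Fintype Y] [Fintype Z]
    [Nonempty X] [Nonempty Y] [Nonempty Z]
    (p : X × Y × Z → ℝ) (hp0 : ∀ t, 0 ≤ p t) (hp1 : ∑ t, p t = 1) :
    0 ≤ Red p := by
  refine sub_nonneg.2 ?_
  calc
    Un p = ∑ y, pY p y * mutInfo (margXZ (doOp p (cy p y))) := Un_eq_sum hp0
    _ ≤ mutInfo (margXZ (doOp p (∑ y, pY p y • cy p y))) :=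
      (concaveOn_mutInfo_margXZ_doOp hp0).le_map_sum (fun y _ => pY_nonneg hp0 y)
        ((sum_pY p).trans hp1) (fun y _ => cy_nonneg hp0 y)
    _ = mutInfo (margXZ p) := by rw [sum_pY_smul_cy hp0, doOp_pZ hp0]
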